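/- arXiv:2109.07803 — 9 statements merged into one kernel-verified Lean document; each statement's English description precedes it below -/
import Mathlib

section
/- Let L be a finite lattice with least and greatest elements, regarded as a category (with a unique morphism x ⟶ y exactly when x ≤ y), equipped with a model structure. Then the weak equivalences are decomposable: if x ≤ y ≤ z in L and the morphism x ⟶ z is a weak equivalence, then both x ⟶ y and y ⟶ z are weak equivalences. -/
/-!
Factor the weak equivalence `x ⟶ z` as an acyclic cofibration `x ⟶ w` followed by an acyclic
fibration `w ⟶ z`, and `x ⟶ y` as a cofibration `x ⟶ q` followed by an acyclic fibration `q ⟶ y`.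
Lifting `x ⟶ q` against `w ⟶ z` gives `q ⟶ w`. In a thin category `q ⟶ w` is the pushout of the
acyclic cofibration `x ⟶ w` along `x ⟶ q`; the retract argument shows that it is a weak
equivalence, and two-out-of-three carries this first to `x ⟶ q`, then to `x ⟶ y` and `y ⟶ z`.
-/

universe v u

open CategoryTheory

section ModelDefs

variable {C : Type u} [Category.{v} C]

/-- `f` is a retract of `g` in the arrow category of `C`. -/
def IsRetractOfHom {X Y X' Y' : C} (f : X ⟶ Y) (g : X' ⟶ Y') : Prop :=
  ∃ (a : X ⟶ X') (b : Y ⟶ Y') (a' : X' ⟶ X) (b' : Y' ⟶ Y),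
    a ≫ a' = 𝟙 X ∧ b ≫ b' = 𝟙 Y ∧ f ≫ b = a ≫ g ∧ g ≫ b' = a' ≫ f

/-- A class of morphisms is stable under retracts (in the arrow category). -/
def StableUnderRetractsHom (P : MorphismProperty C) : Prop :=
  ∀ ⦃X Y X' Y' : C⦄ (f : X ⟶ Y) (g : X' ⟶ Y'), IsRetractOfHom f g → P g → P f

/-- A (Quillen) model structure on a category `C`: three classes of morphisms —
weak equivalences, fibrations, cofibrations — each closed under composition and
retracts, the weak equivalences satisfying two-out-of-three, cofibrations
(resp. acyclic cofibrations) having the left lifting property against acyclic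
fibrations (resp. fibrations), and every morphism factoring as a cofibration
followed by an acyclic fibration and as an acyclic cofibration followed by a
fibration. A model category is a category with all finite limits and colimits
equipped with such a structure. -/
structure ModelStructure (C : Type u) [Category.{v} C] where
  weq : MorphismProperty C
  fib : MorphismProperty C
  cof : MorphismProperty C
  weq_comp : weq.IsStableUnderComposition
  fib_comp : fib.IsStableUnderComposition
  cof_comp : cof.IsStableUnderComposition
  weq_retract : StableUnderRetractsHom weq
  fib_retract : StableUnderRetractsHom fib
  cof_retract : StableUnderRetractsHom cof
  weq_two_out_of_three : weq.HasTwoOutOfThreeProperty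
  lift_cof_trivFib : ∀ ⦃A B X Y : C⦄ (i : A ⟶ B) (p : X ⟶ Y),
    cof i → fib p → weq p → HasLiftingProperty i p
  lift_trivCof_fib : ∀ ⦃A B X Y : C⦄ (i : A ⟶ B) (p : X ⟶ Y),
    cof i → weq i → fib p → HasLiftingProperty i p
  factor_cof_trivFib : ∀ ⦃X Y : C⦄ (f : X ⟶ Y),
    ∃ (Z : C) (i : X ⟶ Z) (p : Z ⟶ Y), cof i ∧ fib p ∧ weq p ∧ i ≫ p = f
  factor_trivCof_fib : ∀ ⦃X Y : C⦄ (f : X ⟶ Y),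
    ∃ (Z : C) (i : X ⟶ Z) (p : Z ⟶ Y), cof i ∧ weq i ∧ fib p ∧ i ≫ p = f

end ModelDefs

namespace ModelStructure

variable {C : Type u} [Category.{v} C] (M : ModelStructure C)

theorem exists_trivCof_trivFib_of_weq {x z : C} {f : x ⟶ z} (hf : M.weq f) :
    ∃ (w : C) (i : x ⟶ w) (p : w ⟶ z),
      M.cof i ∧ M.weq i ∧ M.fib p ∧ M.weq p ∧ i ≫ p = f := by
  have := M.weq_two_out_of_three
  obtain ⟨w, i, p, cof_i, weq_i, fib_p, rfl⟩ := M.factor_trivCof_fib f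
  exact ⟨w, i, p, cof_i, weq_i, fib_p, M.weq.of_precomp i p weq_i hf, rfl⟩

theorem weq_right_of_trivCof_comp [Quiver.IsThin C] {x q w : C} {f : x ⟶ q} {g : q ⟶ w}
    (hcof : M.cof (f ≫ g)) (hweq : M.weq (f ≫ g)) : M.weq g := by
  obtain ⟨r, j, p, -, weq_j, fib_p, j_comp_p⟩ := M.factor_trivCof_fib g
  have := M.lift_trivCof_fib (f ≫ g) p hcof hweq fib_p
  have sq : CommSq (f ≫ j) (f ≫ g) p (𝟙 w) := ⟨by simp [j_comp_p]⟩
  have g_retract_j : IsRetractOfHom g j :=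
    ⟨𝟙 q, sq.lift, 𝟙 q, p, Category.comp_id _, sq.fac_right, Subsingleton.elim _ _,
      by rw [j_comp_p, Category.id_comp]⟩
  exact M.weq_retract g j g_retract_j weq_j

theorem weq_left_of_weq_comp [Quiver.IsThin C] {x y z : C} {f : x ⟶ y} {g : y ⟶ z}
    (hfg : M.weq (f ≫ g)) : M.weq f := by
  have := M.weq_two_out_of_three
  obtain ⟨w, i, p, cof_i, weq_i, fib_p, weq_p, i_comp_p⟩ := M.exists_trivCof_trivFib_of_weq hfg
  obtain ⟨q, j, s, cof_j, -, weq_s, rfl⟩ := M.factor_cof_trivFib f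
  have := M.lift_cof_trivFib j p cof_j fib_p weq_p
  have sq : CommSq i j p (s ≫ g) := ⟨by rw [i_comp_p, Category.assoc]⟩
  rw [← sq.fac_left] at cof_i weq_i
  have weq_lift : M.weq sq.lift := M.weq_right_of_trivCof_comp cof_i weq_i
  have weq_j : M.weq j := M.weq.of_postcomp j sq.lift weq_lift weq_i
  exact M.weq.comp_mem j s weq_j weq_s

end ModelStructure

theorem weq_decomposable_of_lattice_general {C : Type u} [Category.{v} C] [Quiver.IsThin C]
    (M : ModelStructure C) {x y z : C} (f : x ⟶ y) (g : y ⟶ z) (hfg : M.weq (f ≫ g)) :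
    M.weq f ∧ M.weq g :=
  have := M.weq_two_out_of_three
  have weq_f : M.weq f := M.weq_left_of_weq_comp hfg
  ⟨weq_f, M.weq.of_precomp f g weq_f hfg⟩

/-- In any model structure on a finite lattice (with least and greatest
elements), the weak equivalences are decomposable. -/
theorem weq_decomposable_of_lattice (L : Type u) [Lattice L] [Fintype L]
    [OrderBot L] [OrderTop L] (M : ModelStructure L)
    (x y z : L) (hxy : x ≤ y) (hyz : y ≤ z)
    (hw : M.weq (homOfLE (hxy.trans hyz))) :
    M.weq (homOfLE hxy) ∧ M.weq (homOfLE hyz) := by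
  exact weq_decomposable_of_lattice_general M (homOfLE hxy) (homOfLE hyz) hw
end

section
/- Fix n : ℕ and a model structure on the category [n] in which every morphism is a weak equivalence (a contractible model structure). Let x ∈ [n]. If m ∈ [n] satisfies: x ≤ m, the morphism x ⟶ m is a cofibration, and for every y with x ≤ y such that x ⟶ y is a cofibration one has y ≤ m (i.e., m is the greatest target of an acyclic cofibration out of x), then m is fibrant, i.e., the morphism m ⟶ n to the terminal object is a fibration. Dually, if q ∈ [n] satisfies: q ≤ x, the morphism q ⟶ x is a fibration, and for every y with y ≤ x such that y ⟶ x is a fibration one has q ≤ y, then q is cofibrant, i.e., the morphism 0 ⟶ q from the initial object is a cofibration. -/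
universe v u

open CategoryTheory

namespace ModelStructure

variable {C : Type u} [Category.{v} C] (M : ModelStructure C) {X Y : C} (f : X ⟶ Y)

theorem fib_of_forall_trivCof_isIso
    (h : ∀ ⦃Z : C⦄ (k : X ⟶ Z), M.cof k → M.weq k → IsIso k) : M.fib f := by
  obtain ⟨Z, k, p, hk, hkW, hp, rfl⟩ := M.factor_trivCof_fib f
  have : IsIso k := h k hk hkW
  have retract : IsRetractOfHom (k ≫ p) p := ⟨k, 𝟙 Y, inv k, 𝟙 Y, by simp⟩
  exact M.fib_retract _ _ retract hp

theorem cof_of_forall_trivFib_isIso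
    (h : ∀ ⦃Z : C⦄ (k : Z ⟶ Y), M.fib k → M.weq k → IsIso k) : M.cof f := by
  obtain ⟨Z, i, k, hi, hk, hkW, rfl⟩ := M.factor_cof_trivFib f
  have : IsIso k := h k hk hkW
  have retract : IsRetractOfHom (i ≫ k) i := ⟨𝟙 X, inv k, 𝟙 X, k, by simp⟩
  exact M.cof_retract _ _ retract hi

end ModelStructure

/-- Greatest target and least source become the conditions on `k`, which in a partial order
say that `Y = A`. -/
theorem maximal_acyclic_cofibration_target_is_fibrant_general
    {C : Type u} [Category.{v} C] (M : ModelStructure C) :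
    (∀ ⦃X A : C⦄ (i : X ⟶ A), M.cof i →
      (∀ ⦃Y : C⦄ (k : A ⟶ Y), M.cof (i ≫ k) → M.weq k → IsIso k) →
      ∀ ⦃Y : C⦄ (f : A ⟶ Y), M.fib f) ∧
    (∀ ⦃X A : C⦄ (p : A ⟶ X), M.fib p →
      (∀ ⦃Y : C⦄ (k : Y ⟶ A), M.fib (k ≫ p) → M.weq k → IsIso k) →
      ∀ ⦃Y : C⦄ (f : Y ⟶ A), M.cof f) :=
  ⟨fun _ _ _ hi hmax _ f => M.fib_of_forall_trivCof_isIso f fun _ k hk =>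
      hmax k (M.cof_comp.comp_mem _ _ hi hk),
    fun _ _ _ hp hmin _ f => M.cof_of_forall_trivFib_isIso f fun _ k hk =>
      hmin k (M.fib_comp.comp_mem _ _ hk hp)⟩

/-- In a contractible model structure on `[n]`, the greatest target `m` of an
(acyclic) cofibration out of `x` is fibrant; dually, the least source `q` of an
(acyclic) fibration into `x` is cofibrant. -/
theorem maximal_acyclic_cofibration_target_is_fibrant (n : ℕ)
    (M : ModelStructure (Fin (n + 1)))
    (hW : ∀ ⦃x y : Fin (n + 1)⦄ (f : x ⟶ y), M.weq f) :
    (∀ (x m : Fin (n + 1)) (hxm : x ≤ m), M.cof (homOfLE hxm) →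
      (∀ (y : Fin (n + 1)) (hxy : x ≤ y), M.cof (homOfLE hxy) → y ≤ m) →
      M.fib (homOfLE (Fin.le_last m))) ∧
    (∀ (x q : Fin (n + 1)) (hqx : q ≤ x), M.fib (homOfLE hqx) →
      (∀ (y : Fin (n + 1)) (hyx : y ≤ x), M.fib (homOfLE hyx) → q ≤ y) →
      M.cof (homOfLE (Fin.zero_le q))) := by
  obtain ⟨fibrant, cofibrant⟩ := maximal_acyclic_cofibration_target_is_fibrant_general M
  exact ⟨
    fun x m hxm hcof hmax => fibrant (homOfLE hxm) hcof (fun y k hk _ =>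
      (PartialOrder.isIso_iff_eq k).2 ((leOfHom k).antisymm (hmax y _ hk))) _,
    fun x q hqx hfib hmin => cofibrant (homOfLE hqx) hfib (fun y k hk _ =>
      (PartialOrder.isIso_iff_eq k).2 ((leOfHom k).antisymm (hmin y _ hk))) _⟩
end

section
/- Fix n : ℕ and a model structure on the category [n]. Suppose a ≤ b in [n] are such that for all x, y with a ≤ x ≤ y ≤ b, the morphism x ⟶ y is a weak equivalence. Then the full subcategory of [n] on the interval {x | a ≤ x ≤ b} (itself a finite linear order, hence a category with all finite limits and colimits), equipped with the classes of weak equivalences, fibrations, and cofibrations obtained by restricting those of [n], is a model category. -/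
universe v u

open CategoryTheory

/-!
Retract closure, two-out-of-three and lifting properties pull back along any fully faithful
functor. Factorizations pull back as well once every object through which a morphism
`F.obj X ⟶ F.obj Y` factors is again in the essential image; for a subset of a preorder this is
order-connectedness.
-/

section Retracts

variable {C : Type*} [Category C]

theorem stableUnderRetractsHom_iff {P : MorphismProperty C} :
    StableUnderRetractsHom P ↔ P.IsStableUnderRetracts where
  mp hP := ⟨fun h hg => hP _ _ ⟨h.i.left, h.i.right, h.r.left, h.r.right,
    h.retract_left, h.retract_right, h.i_w.symm, h.r_w.symm⟩ hg⟩
  mpr _ := by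
    rintro X Y X' Y' f g ⟨a, b, a', b', ha, hb, hab, hab'⟩ hg
    have retract : RetractArrow f g :=
      { i := Arrow.homMk a b hab.symm
        r := Arrow.homMk a' b' hab'.symm
        retract := Arrow.hom_ext _ _ ha hb }
    exact P.of_retract retract hg

namespace ModelStructure

variable (M : ModelStructure C)

instance : M.weq.IsStableUnderRetracts := stableUnderRetractsHom_iff.mp M.weq_retract

instance : M.fib.IsStableUnderRetracts := stableUnderRetractsHom_iff.mp M.fib_retract

instance : M.cof.IsStableUnderRetracts := stableUnderRetractsHom_iff.mp M.cof_retract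

end ModelStructure

end Retracts

section InverseImage

variable {C D : Type*} [Category C] [Category D]

/-- The essential image of `F` is convex: it contains every object lying between two of its
objects. When `F` is full, this says that it contains the middle object of each factorization of
each morphism `F.map f`. -/
def HasConvexEssImage (F : C ⥤ D) : Prop :=
  ∀ ⦃X Y : C⦄ ⦃Z : D⦄, (F.obj X ⟶ Z) → (Z ⟶ F.obj Y) → F.essImage Z

variable {F : C ⥤ D} [F.Full] [F.Faithful]

theorem hasLiftingProperty_of_map {A B X Y : C} {i : A ⟶ B} {p : X ⟶ Y}
    (h : HasLiftingProperty (F.map i) (F.map p)) : HasLiftingProperty i p where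
  sq_hasLift {f g} sq := by
    obtain ⟨l, hl⟩ := F.map_surjective (sq.map F).lift
    have fac_left : i ≫ l = f := F.map_injective (by rw [F.map_comp, hl, CommSq.fac_left])
    have fac_right : l ≫ p = g := F.map_injective (by rw [F.map_comp, hl, CommSq.fac_right])
    exact .mk' { l := l, fac_left := fac_left, fac_right := fac_right }

theorem HasConvexEssImage.comp_inverseImage (hF : HasConvexEssImage F)
    {W₁ W₂ : MorphismProperty D} [W₁.RespectsIso] [W₂.RespectsIso] {X Y : C} {f : X ⟶ Y}
    (hf : W₁.comp W₂ (F.map f)) : (W₁.inverseImage F).comp (W₂.inverseImage F) f := by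
  obtain ⟨Z, i, p, fac, hi, hp⟩ := hf
  obtain ⟨Z', ⟨e⟩⟩ := hF i p
  obtain ⟨i', hi'⟩ := F.map_surjective (i ≫ e.inv)
  obtain ⟨p', hp'⟩ := F.map_surjective (e.hom ≫ p)
  have fac' : i' ≫ p' = f := F.map_injective (by
    rw [F.map_comp, hi', hp', Category.assoc, e.inv_hom_id_assoc, fac])
  have mem_left : W₁ (F.map i') := hi' ▸ (W₁.cancel_right_of_respectsIso i e.inv).mpr hi
  have mem_right : W₂ (F.map p') := hp' ▸ (W₂.cancel_left_of_respectsIso e.hom p).mpr hp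
  exact ⟨⟨Z', i', p', fac', mem_left, mem_right⟩⟩

/-- The pullback of a model structure along a fully faithful functor with convex essential image:
each of the three classes consists of the morphisms that `F` sends into the given one. -/
def ModelStructure.inverseImage (M : ModelStructure D) (hF : HasConvexEssImage F) :
    ModelStructure C where
  weq := M.weq.inverseImage F
  fib := M.fib.inverseImage F
  cof := M.cof.inverseImage F
  weq_comp := have := M.weq_comp; inferInstance
  fib_comp := have := M.fib_comp; inferInstance
  cof_comp := have := M.cof_comp; inferInstance
  weq_retract := stableUnderRetractsHom_iff.mpr inferInstance
  fib_retract := stableUnderRetractsHom_iff.mpr inferInstance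
  cof_retract := stableUnderRetractsHom_iff.mpr inferInstance
  weq_two_out_of_three := have := M.weq_two_out_of_three; inferInstance
  lift_cof_trivFib _ _ _ _ _ _ hi hp hp' :=
    hasLiftingProperty_of_map (M.lift_cof_trivFib _ _ hi hp hp')
  lift_trivCof_fib _ _ _ _ _ _ hi hi' hp :=
    hasLiftingProperty_of_map (M.lift_trivCof_fib _ _ hi hi' hp)
  factor_cof_trivFib _ _ f := by
    obtain ⟨Z, i, p, hi, hp, hp', fac⟩ := M.factor_cof_trivFib (F.map f)
    have hf : M.cof.comp (M.fib ⊓ M.weq) (F.map f) := ⟨⟨Z, i, p, fac, hi, hp, hp'⟩⟩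
    obtain ⟨Z', i', p', fac', hi', hp', hp''⟩ := hF.comp_inverseImage hf
    exact ⟨Z', i', p', hi', hp', hp'', fac'⟩
  factor_trivCof_fib _ _ f := by
    obtain ⟨Z, i, p, hi, hi', hp, fac⟩ := M.factor_trivCof_fib (F.map f)
    have hf : (M.cof ⊓ M.weq).comp M.fib (F.map f) := ⟨⟨Z, i, p, fac, ⟨hi, hi'⟩, hp⟩⟩
    obtain ⟨Z', i', p', fac', ⟨hi', hi''⟩, hp'⟩ := hF.comp_inverseImage hf
    exact ⟨Z', i', p', hi', hi'', hp', fac'⟩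

end InverseImage

section Preorder

variable {α : Type*} [Preorder α]

theorem hasConvexEssImage_subtype (s : Set α) [hs : s.OrdConnected] :
    HasConvexEssImage (OrderEmbedding.subtype (· ∈ s)).monotone.functor :=
  fun X Y Z i p => ⟨⟨Z, hs.out X.2 Y.2 ⟨leOfHom i, leOfHom p⟩⟩, ⟨Iso.refl Z⟩⟩

theorem restriction_to_weq_interval_is_model_structure_general (M : ModelStructure α) (s : Set α)
    [s.OrdConnected] :
    ∃ M' : ModelStructure s,
      ∀ (x y : s) (h : x ≤ y),
        (M'.weq (homOfLE h) ↔ M.weq (homOfLE (Subtype.coe_le_coe.mpr h))) ∧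
        (M'.fib (homOfLE h) ↔ M.fib (homOfLE (Subtype.coe_le_coe.mpr h))) ∧
        (M'.cof (homOfLE h) ↔ M.cof (homOfLE (Subtype.coe_le_coe.mpr h))) :=
  ⟨M.inverseImage (hasConvexEssImage_subtype s), fun _ _ _ => ⟨Iff.rfl, Iff.rfl, Iff.rfl⟩⟩

end Preorder

/-- If all morphisms of `[n]` between elements of an interval `[a, b]` are weak
equivalences, then the restriction of the model structure of `[n]` to the full
subcategory on that interval is again a model structure. -/
theorem restriction_to_weq_interval_is_model_structure (n : ℕ)
    (M : ModelStructure (Fin (n + 1))) (a b : Fin (n + 1)) (hab : a ≤ b)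
    (hW : ∀ (x y : Fin (n + 1)), a ≤ x → ∀ (hxy : x ≤ y), y ≤ b →
      M.weq (homOfLE hxy)) :
    ∃ M' : ModelStructure (Set.Icc a b),
      ∀ (x y : Set.Icc a b) (h : x ≤ y),
        (M'.weq (homOfLE h) ↔ M.weq (homOfLE (Subtype.coe_le_coe.mpr h))) ∧
        (M'.fib (homOfLE h) ↔ M.fib (homOfLE (Subtype.coe_le_coe.mpr h))) ∧
        (M'.cof (homOfLE h) ↔ M.cof (homOfLE (Subtype.coe_le_coe.mpr h))) :=
  restriction_to_weq_interval_is_model_structure_general M (Set.Icc a b)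
end

section
/- Fix n : ℕ and any model structure on the category [n]. Then [n] is a monoidal model category for the cartesian monoidal structure (x ⊗ y = min(x, y), unit n). Explicitly: (i) pushout-product axiom: if x ⟶ y and x' ⟶ y' are cofibrations (so x ≤ y and x' ≤ y'), then the morphism max(min(x, y'), min(y, x')) ⟶ min(y, y') is a cofibration, and it is moreover a weak equivalence whenever x ⟶ y or x' ⟶ y' is a weak equivalence; (ii) unit axiom: for every cofibrant object x (i.e., 0 ⟶ x is a cofibration) and every q such that q ⟶ n is both a fibration and a weak equivalence, the morphism min(q, x) ⟶ x is a weak equivalence. -/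
/-!
In a model category, cofibrations and trivial cofibrations are closed under cobase change, by the
retract argument. In a linear order, one of two arrows `x ⟶ y` and `x' ⟶ y'` has the smaller
target, say `y ≤ y'`, and then their pushout-product is the cobase change of `x ⟶ y` along
`x ≤ max x (min y x')`; hence it is a cofibration if both arrows are.

Let `x ⟶ y` be a trivial cofibration. If `y' ≤ x`, the pushout-product `s ⟶ t` is an isomorphism.
Otherwise `x ⟶ y` factors through it as `x ⟶ s ⟶ t ⟶ y`; since in a poset `b ⟶ c` is a cobase
change of any composite `a ⟶ b ⟶ c`, both `s ⟶ y` and `t ⟶ y` are trivial cofibrations, and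
two-out-of-three applies.

For the unit axiom, lifting `⊥ ⟶ x` against `q ⟶ ⊤` gives `x ≤ q`, so `min q x = x`.
-/

universe v u

open CategoryTheory

lemma StableUnderRetractsHom.isStableUnderRetracts {C : Type u} [Category.{v} C]
    {P : MorphismProperty C} (hP : StableUnderRetractsHom P) : P.IsStableUnderRetracts where
  of_retract h := hP _ _ ⟨h.i.left, h.i.right, h.r.left, h.r.right, h.retract_left,
    h.retract_right, h.i_w.symm, h.r_w.symm⟩

lemma mem_of_comp_mem_of_isThin {C : Type u} [Category.{v} C] [Quiver.IsThin C]
    {P : MorphismProperty C} [P.IsStableUnderCobaseChange] {X Y Z : C} {f : X ⟶ Y} {g : Y ⟶ Z}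
    (hfg : P (f ≫ g)) : P g :=
  P.of_precomp (W' := .epimorphisms C) f g (.infer_property f) hfg

namespace ModelStructure

section Category

variable {C : Type u} [Category.{v} C] (M : ModelStructure C)

lemma llp_trivFib : (M.fib ⊓ M.weq).llp = M.cof := by
  have := M.cof_retract.isStableUnderRetracts
  have : M.cof.HasFactorization (M.fib ⊓ M.weq) := ⟨fun f ↦ by
    obtain ⟨Z, i, p, hi, hp, hpw, fac⟩ := M.factor_cof_trivFib f
    exact ⟨⟨Z, i, p, fac, hi, hp, hpw⟩⟩⟩
  exact MorphismProperty.llp_eq_of_le_llp_of_hasFactorization_of_isStableUnderRetracts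
    fun _ _ i hi _ _ p hp ↦ M.lift_cof_trivFib i p hi hp.1 hp.2

lemma llp_fib : M.fib.llp = M.cof ⊓ M.weq := by
  have := M.cof_retract.isStableUnderRetracts
  have := M.weq_retract.isStableUnderRetracts
  have : (M.cof ⊓ M.weq).HasFactorization M.fib := ⟨fun f ↦ by
    obtain ⟨Z, i, p, hi, hiw, hp, fac⟩ := M.factor_trivCof_fib f
    exact ⟨⟨Z, i, p, fac, ⟨hi, hiw⟩, hp⟩⟩⟩
  exact MorphismProperty.llp_eq_of_le_llp_of_hasFactorization_of_isStableUnderRetracts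
    fun _ _ i hi _ _ p hp ↦ M.lift_trivCof_fib i p hi.1 hi.2 hp

instance : M.cof.IsStableUnderCobaseChange :=
  M.llp_trivFib ▸ inferInstance

instance : (M.cof ⊓ M.weq).IsStableUnderCobaseChange :=
  M.llp_fib ▸ inferInstance

lemma weq_of_isIso {X Y : C} (f : X ⟶ Y) [IsIso f] : M.weq f :=
  have hf : (M.cof ⊓ M.weq) f := M.llp_fib ▸ M.fib.llp_of_isIso f
  hf.2

lemma weq_of_trivCof_comp [Quiver.IsThin C] {X Y Z W : C} (f : X ⟶ Y) (g : Y ⟶ Z) (h : Z ⟶ W)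
    (hfgh : (M.cof ⊓ M.weq) (f ≫ g ≫ h)) : M.weq g := by
  have hgh : (M.cof ⊓ M.weq) (g ≫ h) := mem_of_comp_mem_of_isThin hfgh
  have hh : (M.cof ⊓ M.weq) h := mem_of_comp_mem_of_isThin hgh
  have := M.weq_two_out_of_three
  exact M.weq.of_postcomp g h hh.2 hgh.2

end Category

lemma le_of_cof_of_trivFib {α : Type u} [Preorder α] (M : ModelStructure α) {a b c d : α}
    {i : a ⟶ b} {p : c ⟶ d} (hi : M.cof i) (hp : M.fib p) (hpw : M.weq p)
    (hac : a ≤ c) (hbd : b ≤ d) : b ≤ c :=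
  have := M.lift_cof_trivFib i p hi hp hpw
  have sq : CommSq (homOfLE hac) i p (homOfLE hbd) := ⟨Subsingleton.elim _ _⟩
  leOfHom sq.lift

end ModelStructure

section Lattice

variable {α : Type u} [Lattice α] {x y x' y' : α}

/-- The pushout-product (Leibniz product) of two arrows for the cartesian product `⊓` of a lattice
seen as a category. Its source is the pushout of `x ⊓ y' ⟵ x ⊓ x' ⟶ y ⊓ x'`, which is a join. -/
def pushoutProduct (f : x ⟶ y) (g : x' ⟶ y') : (x ⊓ y') ⊔ (y ⊓ x') ⟶ y ⊓ y' :=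
  homOfLE (sup_le (inf_le_inf_right y' (leOfHom f)) (inf_le_inf_left y (leOfHom g)))

lemma pushoutProduct_comm_iff (P : MorphismProperty α) (f : x ⟶ y) (g : x' ⟶ y') :
    P (pushoutProduct f g) ↔ P (pushoutProduct g f) := by
  have mem_iff {a b c d : α} (hac : a = c) (hbd : b = d) (k : a ⟶ b) (l : c ⟶ d) :
      P k ↔ P l := by
    subst hac hbd
    rw [Subsingleton.elim k l]
  exact mem_iff (by rw [sup_comm, inf_comm y, inf_comm x]) (inf_comm y y') _ _

lemma isIso_pushoutProduct (f : x ⟶ y) (g : x' ⟶ y') (h : y' ≤ x) :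
    IsIso (pushoutProduct f g) :=
  (isIso_iff_of_thin _).2 ⟨homOfLE ((inf_le_right.trans (le_inf h le_rfl)).trans le_sup_left)⟩

lemma pushoutProduct_mem_of_target_le {P : MorphismProperty α} [P.IsStableUnderCobaseChange]
    {f : x ⟶ y} (hf : P f) (g : x' ⟶ y') (h : y ≤ y') : P (pushoutProduct f g) := by
  let e : y ⟶ y ⊓ y' := homOfLE (le_inf le_rfl h)
  have : IsIso e := (isIso_iff_of_thin e).2 ⟨homOfLE inf_le_left⟩
  let i : x ⟶ (x ⊓ y') ⊔ (y ⊓ x') :=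
    homOfLE ((le_inf le_rfl ((leOfHom f).trans h)).trans le_sup_left)
  -- Parallel arrows of a preorder are definitionally equal: `i ≫ pushoutProduct f g` is `f ≫ e`.
  have hfe : P (i ≫ pushoutProduct f g) := (P.cancel_right_of_respectsIso f e).2 hf
  exact mem_of_comp_mem_of_isThin hfe

end Lattice

namespace ModelStructure

variable {α : Type u} [LinearOrder α] (M : ModelStructure α) {x y x' y' : α}

lemma cof_pushoutProduct {f : x ⟶ y} {g : x' ⟶ y'} (hf : M.cof f) (hg : M.cof g) :
    M.cof (pushoutProduct f g) := by
  rcases le_total y y' with h | h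
  · exact pushoutProduct_mem_of_target_le hf g h
  · exact (pushoutProduct_comm_iff M.cof f g).2 (pushoutProduct_mem_of_target_le hg f h)

lemma weq_pushoutProduct {f : x ⟶ y} (hf : (M.cof ⊓ M.weq) f) (g : x' ⟶ y') :
    M.weq (pushoutProduct f g) := by
  rcases le_total y' x with hy'x | hxy'
  · have := isIso_pushoutProduct f g hy'x
    exact M.weq_of_isIso _
  · let i : x ⟶ (x ⊓ y') ⊔ (y ⊓ x') := homOfLE ((le_inf le_rfl hxy').trans le_sup_left)
    let j : y ⊓ y' ⟶ y := homOfLE inf_le_left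
    exact M.weq_of_trivCof_comp i (pushoutProduct f g) j hf

end ModelStructure

theorem cartesian_monoidal_model_structure_general {α : Type u} [LinearOrder α] [BoundedOrder α]
    (M : ModelStructure α) :
    (∀ (x y x' y' : α) (hxy : x ≤ y) (hx'y' : x' ≤ y'),
      M.cof (homOfLE hxy) → M.cof (homOfLE hx'y') →
      (M.cof (homOfLE (max_le (min_le_min hxy (le_refl y'))
          (min_le_min (le_refl y) hx'y') :
          max (min x y') (min y x') ≤ min y y')) ∧
        ((M.weq (homOfLE hxy) ∨ M.weq (homOfLE hx'y')) →
          M.weq (homOfLE (max_le (min_le_min hxy (le_refl y'))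
            (min_le_min (le_refl y) hx'y') :
            max (min x y') (min y x') ≤ min y y'))))) ∧
    (∀ (x : α), M.cof (homOfLE (bot_le : ⊥ ≤ x)) →
      ∀ (q : α), M.fib (homOfLE (le_top : q ≤ ⊤)) →
        M.weq (homOfLE (le_top : q ≤ ⊤)) →
        M.weq (homOfLE (min_le_right q x : min q x ≤ x))) := by
  refine ⟨fun x y x' y' hxy hx'y' hc hc' ↦ ⟨M.cof_pushoutProduct hc hc', ?_⟩,
    fun x hx q hq hqw ↦ ?_⟩
  · rintro (hw | hw)
    · exact M.weq_pushoutProduct ⟨hc, hw⟩ (homOfLE hx'y')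
    · exact (pushoutProduct_comm_iff M.weq _ _).2 (M.weq_pushoutProduct ⟨hc', hw⟩ (homOfLE hxy))
  · have hxq : x ≤ q := M.le_of_cof_of_trivFib hx hq hqw bot_le le_top
    have := isIso_homOfLE (min_eq_right hxq)
    exact M.weq_of_isIso _

/-- Any model structure on `[n]` is monoidal for the cartesian monoidal
structure `x ⊗ y = min x y` with unit `n`: the pushout-product axiom and the
unit axiom hold. -/
theorem cartesian_monoidal_model_structure (n : ℕ)
    (M : ModelStructure (Fin (n + 1))) :
    (∀ (x y x' y' : Fin (n + 1)) (hxy : x ≤ y) (hx'y' : x' ≤ y'),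
      M.cof (homOfLE hxy) → M.cof (homOfLE hx'y') →
      (M.cof (homOfLE (max_le (min_le_min hxy (le_refl y'))
          (min_le_min (le_refl y) hx'y') :
          max (min x y') (min y x') ≤ min y y')) ∧
        ((M.weq (homOfLE hxy) ∨ M.weq (homOfLE hx'y')) →
          M.weq (homOfLE (max_le (min_le_min hxy (le_refl y'))
            (min_le_min (le_refl y) hx'y') :
            max (min x y') (min y x') ≤ min y y'))))) ∧
    (∀ (x : Fin (n + 1)), M.cof (homOfLE (Fin.zero_le x)) →
      ∀ (q : Fin (n + 1)), M.fib (homOfLE (Fin.le_last q)) →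
        M.weq (homOfLE (Fin.le_last q)) →
        M.weq (homOfLE (min_le_right q x : min q x ≤ x))) :=
  cartesian_monoidal_model_structure_general M
end

section
/- Fix n : ℕ and a model structure on the category [n]. Say that x and y are weakly equivalent if the morphism min(x, y) ⟶ max(x, y) is a weak equivalence. Then every weak equivalence class contains a unique bifibrant object: for every x ∈ [n] there exists exactly one z ∈ [n] that is weakly equivalent to x and such that 0 ⟶ z is a cofibration and z ⟶ n is a fibration. -/
universe v u

open CategoryTheory

/-! Let `q ⟶ x` be a cofibrant replacement of `x` and `x ⟶ r` a fibrant replacement. Factoring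
the weak equivalence `q ⟶ r` as an acyclic cofibration `q ⟶ z` followed by an acyclic fibration
`z ⟶ r` gives a bifibrant object `z`. The arrow `x ⟶ x ⊔ z` is a pushout of `q ⟶ z` and the arrow
`x ⊓ z ⟶ x` is a pullback of `z ⟶ r`, so `x ⊓ z ⟶ x ⊔ z` is a weak equivalence.

Suppose `y` is another bifibrant object such that `x ⊓ y ⟶ x ⊔ y` is a weak equivalence. Factor
this arrow as an acyclic cofibration followed by an acyclic fibration: by lifting, the middle
object can only be `y`. Lifting now yields `q ≤ y`, hence `z ≤ y`, and dually `y ≤ r`, hence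
`y ≤ z`. -/

namespace ModelStructure

attribute [instance] fib_comp cof_comp weq_two_out_of_three

section Category

variable {C : Type u} [Category.{v} C] (M : ModelStructure C)

/-- The acyclic cofibrations: cofibrations that are weak equivalences,
which lift against fibrations. -/
def trivCof : MorphismProperty C := M.cof ⊓ M.weq

/-- The acyclic fibrations: fibrations that are weak equivalences,
against which cofibrations lift. -/
def trivFib : MorphismProperty C := M.fib ⊓ M.weq

theorem exists_trivCof_comp_trivFib_eq {X Y : C} (f : X ⟶ Y) (hf : M.weq f) :
    ∃ (Z : C) (i : X ⟶ Z) (p : Z ⟶ Y), M.trivCof i ∧ M.trivFib p ∧ i ≫ p = f := by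
  obtain ⟨Z, i, p, hi, hiw, hp, rfl⟩ := M.factor_trivCof_fib f
  exact ⟨Z, i, p, ⟨hi, hiw⟩, ⟨hp, M.weq.of_precomp i p hiw hf⟩, rfl⟩

end Category

section Preorder

variable {α : Type u} [Preorder α] (M : ModelStructure α)

/-- The object `a` is cofibrant, the initial object being encoded as the bottom element. -/
def IsCofibrant [OrderBot α] (a : α) : Prop := M.cof (homOfLE (bot_le : ⊥ ≤ a))

/-- The object `a` is fibrant, the terminal object being encoded as the top element. -/
def IsFibrant [OrderTop α] (a : α) : Prop := M.fib (homOfLE (le_top : a ≤ ⊤))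

variable {M}

theorem le_of_hasLiftingProperty {a b x y : α} (i : a ⟶ b) (p : x ⟶ y)
    [HasLiftingProperty i p] (hax : a ≤ x) (hby : b ≤ y) : b ≤ x :=
  have sq : CommSq (homOfLE hax) i p (homOfLE hby) := ⟨Subsingleton.elim _ _⟩
  sq.lift.le

theorem trivCof.le_of_fib {a b x y : α} {i : a ⟶ b} {p : x ⟶ y} (hi : M.trivCof i)
    (hp : M.fib p) (hax : a ≤ x) (hby : b ≤ y) : b ≤ x :=
  have := M.lift_trivCof_fib i p hi.1 hi.2 hp
  le_of_hasLiftingProperty i p hax hby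

theorem trivFib.le_of_cof {a b x y : α} {i : a ⟶ b} {p : x ⟶ y} (hp : M.trivFib p)
    (hi : M.cof i) (hax : a ≤ x) (hby : b ≤ y) : b ≤ x :=
  have := M.lift_cof_trivFib i p hi hp.1 hp.2
  le_of_hasLiftingProperty i p hax hby

theorem IsFibrant.le_of_trivCof [OrderTop α] {a b x : α} {i : a ⟶ b} (hx : M.IsFibrant x)
    (hi : M.trivCof i) (hax : a ≤ x) : b ≤ x :=
  hi.le_of_fib hx hax le_top

theorem IsCofibrant.le_of_trivFib [OrderBot α] {b x y : α} {p : x ⟶ y} (hb : M.IsCofibrant b)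
    (hp : M.trivFib p) (hby : b ≤ y) : b ≤ x :=
  hp.le_of_cof hb bot_le hby

theorem IsFibrant.of_fib [OrderTop α] {a b : α} {p : a ⟶ b} (hb : M.IsFibrant b)
    (hp : M.fib p) : M.IsFibrant a :=
  M.fib.comp_mem p _ hp hb

theorem IsCofibrant.of_cof [OrderBot α] {a b : α} {i : a ⟶ b} (ha : M.IsCofibrant a)
    (hi : M.cof i) : M.IsCofibrant b :=
  M.cof.comp_mem _ i ha hi

variable (M)

theorem exists_isFibrant_trivCof [OrderTop α] (x : α) :
    ∃ (r : α) (j : x ⟶ r), M.IsFibrant r ∧ M.trivCof j := by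
  obtain ⟨r, j, _, hj, hjw, hr, -⟩ := M.factor_trivCof_fib (homOfLE (le_top : x ≤ ⊤))
  exact ⟨r, j, hr, hj, hjw⟩

theorem exists_isCofibrant_trivFib [OrderBot α] (x : α) :
    ∃ (q : α) (p : q ⟶ x), M.IsCofibrant q ∧ M.trivFib p := by
  obtain ⟨q, _, p, hq, hp, hpw, -⟩ := M.factor_cof_trivFib (homOfLE (bot_le : ⊥ ≤ x))
  exact ⟨q, p, hq, hp, hpw⟩

end Preorder

section PartialOrder

variable {α : Type u}

theorem trivCof.homOfLE_le_sup_left [SemilatticeSup α] {M : ModelStructure α} {a b x : α}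
    {i : a ⟶ b} (hi : M.trivCof i) (hax : a ≤ x) :
    M.trivCof (homOfLE (le_sup_left : x ≤ x ⊔ b)) := by
  obtain ⟨c, k, p, hk, hkw, hp, -⟩ := M.factor_trivCof_fib (homOfLE (le_sup_left : x ≤ x ⊔ b))
  have hbc : b ≤ c := hi.le_of_fib hp (hax.trans k.le) le_sup_right
  obtain rfl : c = x ⊔ b := p.le.antisymm (sup_le k.le hbc)
  exact ⟨hk, hkw⟩

theorem trivFib.homOfLE_inf_le_left [SemilatticeInf α] {M : ModelStructure α} {a b x : α}
    {p : a ⟶ b} (hp : M.trivFib p) (hxb : x ≤ b) :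
    M.trivFib (homOfLE (inf_le_left : x ⊓ a ≤ x)) := by
  obtain ⟨c, i, k, hi, hk, hkw, -⟩ := M.factor_cof_trivFib (homOfLE (inf_le_left : x ⊓ a ≤ x))
  have hca : c ≤ a := hp.le_of_cof hi inf_le_right (k.le.trans hxb)
  obtain rfl : c = x ⊓ a := (le_inf k.le hca).antisymm i.le
  exact ⟨hk, hkw⟩

theorem trivCof_and_trivFib_of_weq_of_bifibrant [PartialOrder α] [BoundedOrder α]
    {M : ModelStructure α} {a y b : α} (hay : a ≤ y) (hyb : y ≤ b)
    (hab : M.weq (homOfLE (hay.trans hyb))) (hc : M.IsCofibrant y) (hf : M.IsFibrant y) :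
    M.trivCof (homOfLE hay) ∧ M.trivFib (homOfLE hyb) := by
  obtain ⟨c, i, p, hi, hp, -⟩ := M.exists_trivCof_comp_trivFib_eq _ hab
  obtain rfl : c = y := (hf.le_of_trivCof hi hay).antisymm (hc.le_of_trivFib hp hyb)
  exact ⟨hi, hp⟩

end PartialOrder

end ModelStructure

theorem unique_bifibrant_in_each_weq_class_general {α : Type u} [Lattice α] [BoundedOrder α]
    (M : ModelStructure α) (x : α) :
    ∃! z : α,
      M.weq (homOfLE (inf_le_sup : x ⊓ z ≤ x ⊔ z)) ∧
      M.cof (homOfLE (bot_le : ⊥ ≤ z)) ∧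
      M.fib (homOfLE (le_top : z ≤ ⊤)) := by
  obtain ⟨q, p, hq, hp⟩ := M.exists_isCofibrant_trivFib x
  obtain ⟨r, j, hr, hj⟩ := M.exists_isFibrant_trivCof x
  obtain ⟨z, i, s, hi, hs, -⟩ :=
    M.exists_trivCof_comp_trivFib_eq (p ≫ j) (M.weq.comp_mem p j hp.2 hj.2)
  have hxz : M.weq (homOfLE (inf_le_sup : x ⊓ z ≤ x ⊔ z)) :=
    M.weq.comp_mem _ _ (hs.homOfLE_inf_le_left j.le).2 (hi.homOfLE_le_sup_left p.le).2
  refine ⟨z, ⟨hxz, hq.of_cof hi.1, hr.of_fib hs.1⟩, ?_⟩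
  rintro y ⟨hxy, hyc : M.IsCofibrant y, hyf : M.IsFibrant y⟩
  obtain ⟨hinf, hsup⟩ :=
    ModelStructure.trivCof_and_trivFib_of_weq_of_bifibrant inf_le_right le_sup_right
      hxy hyc hyf
  have hyr : y ≤ r := hr.le_of_trivCof hinf (inf_le_left.trans j.le)
  have hqy : q ≤ y := hq.le_of_trivFib hsup (p.le.trans le_sup_left)
  exact (hyc.le_of_trivFib hs hyr).antisymm (hyf.le_of_trivCof hi hqy)

/-- For any model structure on `[n]`, every weak equivalence class contains a
unique bifibrant object: say `x` and `z` are weakly equivalent when the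
morphism `min x z ⟶ max x z` is a weak equivalence; then for every `x` there is
exactly one `z` weakly equivalent to `x` with `0 ⟶ z` a cofibration and
`z ⟶ n` a fibration. -/
theorem unique_bifibrant_in_each_weq_class (n : ℕ)
    (M : ModelStructure (Fin (n + 1))) (x : Fin (n + 1)) :
    ∃! z : Fin (n + 1),
      M.weq (homOfLE (min_le_max : min x z ≤ max x z)) ∧
      M.cof (homOfLE (Fin.zero_le z)) ∧
      M.fib (homOfLE (Fin.le_last z)) :=
  unique_bifibrant_in_each_weq_class_general M x
end

section
/- For every positive integer n, the binomial coefficient C(2n−1, n) equals the sum, over all compositions c of n, of the product of the Catalan numbers of the blocks of c: C(2n−1, n) = ∑_{c a composition of n} ∏_{i} catalan(cᵢ), where the sum runs over ordered tuples of positive integers summing to n and cᵢ ranges over the blocks of c. -/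
/-!
Let `C`, `B` and `S` be the generating functions of the Catalan numbers, of the central binomial
coefficients and of the sums over compositions. Splitting off the first block of a composition
gives `S = 1 + X * T * S` with `C = 1 + X * T`, that is `C * S + 1 = 2 * S`. Since `B` is the
derivative of `X * C`, differentiating `X * C = X + (X * C) ^ 2` gives `B = 1 + 2 * X * C * B`,
which together with `C = 1 + X * C ^ 2` becomes `C * B + C = 2 * B`. Multiplying the first equation
by `B` and the last one by `S` yields `C * S = B` on cancelling `C * B * S`, so `2 * S = B + 1`;
finally `C(2n, n) = 2 * C(2n-1, n)` for `n > 0`. No equation involves subtraction, so all of them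
make sense over `ℕ`, where cancellation of addition suffices.
-/

open PowerSeries
open Finset.HasAntidiagonal (antidiagonal)

instance {R : Type*} [Semiring R] [IsCancelAdd R] : IsCancelAdd R⟦X⟧ :=
  inferInstanceAs (IsCancelAdd ((Unit →₀ ℕ) → R))

section Composition

/-- The bijection removing the first block `i + 1` of a composition of `n + 1`, which leaves a
composition of `n - i`. -/
def compositionSuccEquiv (n : ℕ) :
    Composition (n + 1) ≃ Σ i : Fin (n + 1), Composition (n - i) where
  toFun
    | ⟨[], _, hsum⟩ => by simp at hsum
    | ⟨b :: l, hpos, hsum⟩ =>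
      have hb : 0 < b := hpos List.mem_cons_self
      have hbl : b + l.sum = n + 1 := List.sum_cons.symm.trans hsum
      ⟨⟨b - 1, by lia⟩, ⟨l, fun hi ↦ hpos (List.mem_cons_of_mem _ hi), by dsimp only; lia⟩⟩
  invFun x := ((Composition.single (x.1 + 1) x.1.1.succ_pos).append x.2).cast (by lia)
  left_inv
    | ⟨[], _, hsum⟩ => by simp at hsum
    | ⟨b :: l, hpos, _⟩ => Composition.ext <| by
      simp [Nat.sub_add_cancel (hpos List.mem_cons_self : 0 < b)]
  right_inv _ := rfl

@[simp]
theorem blocks_compositionSuccEquiv_symm {n : ℕ} (x : Σ i : Fin (n + 1), Composition (n - i)) :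
    ((compositionSuccEquiv n).symm x).blocks = ((x.1 : ℕ) + 1) :: x.2.blocks :=
  rfl

theorem sum_composition_succ {M : Type*} [AddCommMonoid M] (g : List ℕ → M) (n : ℕ) :
    ∑ c : Composition (n + 1), g c.blocks =
      ∑ p ∈ antidiagonal n, ∑ c : Composition p.2, g ((p.1 + 1) :: c.blocks) := by
  rw [← (compositionSuccEquiv n).symm.sum_comp, Fintype.sum_sigma,
    Finset.Nat.sum_antidiagonal_eq_sum_range_succ
      (fun i j ↦ ∑ c : Composition j, g ((i + 1) :: c.blocks)), Finset.sum_range]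
  simp only [blocks_compositionSuccEquiv_symm]

variable {R : Type*} [Semiring R]

/-- The generating function `∑ₙ (∑_c ∏ᵢ f cᵢ) Xⁿ`, where `c` runs over the compositions of `n`,
with blocks `cᵢ`. -/
noncomputable def compositionSeries (f : ℕ → R) : R⟦X⟧ :=
  mk fun n ↦ ∑ c : Composition n, (c.blocks.map f).prod

@[simp]
theorem coeff_compositionSeries (f : ℕ → R) (n : ℕ) :
    coeff n (compositionSeries f) = ∑ c : Composition n, (c.blocks.map f).prod :=
  coeff_mk _ _

theorem compositionSeries_eq_one_add (f : ℕ → R) :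
    compositionSeries f = 1 + X * ((mk fun n ↦ f (n + 1)) * compositionSeries f) := by
  ext (_ | n)
  · have hnil (c : Composition 0) : c.blocks = [] := c.blocks_eq_nil.2 rfl
    simp [hnil, composition_card]
  · rw [coeff_compositionSeries, sum_composition_succ fun l ↦ (l.map f).prod, map_add,
      coeff_succ_X_mul, coeff_mul]
    simp [coeff_one, Finset.mul_sum]

end Composition

section CentralBinom

/-- The generating function of the central binomial coefficients. -/
def centralBinomSeries : ℕ⟦X⟧ :=
  mk Nat.centralBinom

@[simp]
theorem coeff_centralBinomSeries (n : ℕ) : coeff n centralBinomSeries = n.centralBinom :=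
  coeff_mk _ _

theorem derivative_X_mul_catalanSeries :
    derivative ℕ (X * catalanSeries) = centralBinomSeries := by
  ext n
  rw [coeff_derivative, coeff_succ_X_mul, catalanSeries_coeff, coeff_centralBinomSeries,
    ← succ_mul_catalan_eq_centralBinom, Nat.cast_id, mul_comm]

theorem centralBinomSeries_eq_one_add :
    centralBinomSeries = 1 + 2 * (X * catalanSeries * centralBinomSeries) := by
  have hquad : X * catalanSeries = X + (X * catalanSeries) ^ 2 := by
    linear_combination X * catalanSeries_sq_mul_X_add_one.symm
  calc
    centralBinomSeries = derivative ℕ (X + (X * catalanSeries) ^ 2) := by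
      rw [← hquad, derivative_X_mul_catalanSeries]
    _ = 1 + 2 * (X * catalanSeries * centralBinomSeries) := by
      rw [map_add, derivative_X, derivative_pow, derivative_X_mul_catalanSeries, Nat.cast_ofNat,
        pow_one, mul_assoc]

theorem catalanSeries_mul_centralBinomSeries_add_catalanSeries :
    catalanSeries * centralBinomSeries + catalanSeries = 2 * centralBinomSeries := by
  linear_combination catalanSeries * centralBinomSeries_eq_one_add.symm +
    2 * centralBinomSeries * catalanSeries_sq_mul_X_add_one.symm

theorem centralBinom_succ_eq_two_mul_choose (n : ℕ) :
    (n + 1).centralBinom = 2 * (2 * n + 1).choose (n + 1) := by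
  rw [Nat.centralBinom_eq_two_mul_choose, mul_add_one, Nat.choose_succ_succ,
    ← Nat.choose_symm_half, ← two_mul]

end CentralBinom

theorem catalanSeries_mul_compositionSeries_catalan_add_one :
    catalanSeries * compositionSeries catalan + 1 = 2 * compositionSeries catalan := by
  have htail : catalanSeries = X * (mk fun n ↦ catalan (n + 1)) + 1 := by
    simpa using eq_X_mul_shift_add_const catalanSeries
  linear_combination compositionSeries catalan * htail +
    (compositionSeries_eq_one_add catalan).symm

theorem catalanSeries_mul_compositionSeries_catalan :
    catalanSeries * compositionSeries catalan = centralBinomSeries := by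
  linear_combination
    compositionSeries catalan * catalanSeries_mul_centralBinomSeries_add_catalanSeries +
      centralBinomSeries * catalanSeries_mul_compositionSeries_catalan_add_one.symm

theorem two_mul_compositionSeries_catalan :
    2 * compositionSeries catalan = centralBinomSeries + 1 := by
  rw [← catalanSeries_mul_compositionSeries_catalan_add_one,
    catalanSeries_mul_compositionSeries_catalan]

/-- For every positive integer `n`, `C(2n-1, n)` equals the sum over all
compositions `c` of `n` of the product of the Catalan numbers of the blocks of
`c`. -/
theorem choose_eq_sum_compositions_prod_catalan (n : ℕ) (hn : 0 < n) :
    Nat.choose (2 * n - 1) n =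
      ∑ c : Composition n, (c.blocks.map catalan).prod := by
  obtain ⟨m, rfl⟩ := Nat.exists_eq_add_one.2 hn
  have hcoeff :
      2 * ∑ c : Composition (m + 1), (c.blocks.map catalan).prod = (m + 1).centralBinom := by
    simpa [two_mul, coeff_one] using congrArg (coeff (m + 1)) two_mul_compositionSeries_catalan
  rw [centralBinom_succ_eq_two_mul_choose] at hcoeff
  exact (Nat.eq_of_mul_eq_mul_left two_pos hcoeff).symm
end

section
/- For every n : ℕ, the number of model structures on the category [n] in which every morphism is a weak equivalence (contractible model structures) is the Catalan number catalan(n+1). -/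
universe v u

open CategoryTheory

/-!
By the retract argument, a contractible model structure on any category is the same thing as a weak
factorization system, so it is determined by its class of fibrations. On a finite linear order,
fibrations out of `x` remain fibrations when their target is lowered, so they are the `x ⟶ y` with
`y ≤ f x`, where `f x` is the largest possible target. Closure under composition says that
`f y ≤ f x` whenever `x ≤ y ≤ f x`; conversely, every inflationary `f` with this property arises:
`x ⟶ y` factors through the least `z ≥ x` with `y ≤ f z`. Fixing `f ⊥ = k` leaves independent
choices of such functions on `(⊥, k]` and above `k`, which is the Catalan recursion.
-/

open MorphismProperty Set

section StableUnderRetracts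

variable {C : Type u} [Category.{v} C] {P : MorphismProperty C}

theorem isRetractOfHom_iff_nonempty_retractArrow {X Y X' Y' : C} {f : X ⟶ Y} {g : X' ⟶ Y'} :
    IsRetractOfHom f g ↔ Nonempty (RetractArrow f g) := by
  constructor
  · rintro ⟨a, b, a', b', haa', hbb', hab, hab'⟩
    exact ⟨⟨Arrow.homMk a b hab.symm, Arrow.homMk a' b' hab'.symm, by ext <;> assumption⟩⟩
  · rintro ⟨h⟩
    exact ⟨h.i.left, h.i.right, h.r.left, h.r.right, h.retract_left, h.retract_right,
      h.i_w.symm, h.r_w.symm⟩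

theorem stableUnderRetractsHom_iff_isStableUnderRetracts :
    StableUnderRetractsHom P ↔ P.IsStableUnderRetracts :=
  ⟨fun hP => ⟨fun h hg => hP _ _ (isRetractOfHom_iff_nonempty_retractArrow.2 ⟨h⟩) hg⟩,
    fun _ _ _ _ _ _ _ h hg => P.of_retract (isRetractOfHom_iff_nonempty_retractArrow.1 h).some hg⟩

end StableUnderRetracts

namespace ModelStructure

variable {C : Type u} [Category.{v} C]

/-- A model structure is contractible if every morphism is a weak equivalence. -/
def IsContractible (M : ModelStructure C) : Prop :=
  ∀ ⦃X Y : C⦄ (f : X ⟶ Y), M.weq f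

theorem IsContractible.isWeakFactorizationSystem {M : ModelStructure C} (hM : M.IsContractible) :
    IsWeakFactorizationSystem M.cof M.fib := by
  have : HasFactorization M.cof M.fib := ⟨fun f => by
    obtain ⟨Z, i, p, hi, -, hp, fac⟩ := M.factor_trivCof_fib f
    exact ⟨⟨Z, i, p, fac, hi, hp⟩⟩⟩
  have := stableUnderRetractsHom_iff_isStableUnderRetracts.1 M.cof_retract
  have := stableUnderRetractsHom_iff_isStableUnderRetracts.1 M.fib_retract
  exact .mk' _ _ fun i p hi hp => M.lift_trivCof_fib i p hi (hM i) hp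

/-- The contractible model structure whose cofibrations and fibrations are the two classes of a
weak factorization system. -/
def ofIsWeakFactorizationSystem (L R : MorphismProperty C) [IsWeakFactorizationSystem L R] :
    ModelStructure C where
  weq := ⊤
  fib := R
  cof := L
  weq_comp := inferInstance
  fib_comp := by rw [← rlp_eq_of_wfs L R]; infer_instance
  cof_comp := by rw [← llp_eq_of_wfs L R]; infer_instance
  weq_retract _ _ _ _ _ _ _ _ := trivial
  fib_retract := by
    rw [stableUnderRetractsHom_iff_isStableUnderRetracts, ← rlp_eq_of_wfs L R]
    infer_instance
  cof_retract := by
    rw [stableUnderRetractsHom_iff_isStableUnderRetracts, ← llp_eq_of_wfs L R]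
    infer_instance
  weq_two_out_of_three := inferInstance
  lift_cof_trivFib _ _ _ _ i p hi hp _ := hasLiftingProperty_of_wfs i p hi hp
  lift_trivCof_fib _ _ _ _ i p hi _ hp := hasLiftingProperty_of_wfs i p hi hp
  factor_cof_trivFib _ _ f :=
    let F := factorizationData L R f
    ⟨F.Z, F.i, F.p, F.hi, F.hp, trivial, F.fac⟩
  factor_trivCof_fib _ _ f :=
    let F := factorizationData L R f
    ⟨F.Z, F.i, F.p, F.hi, trivial, F.hp, F.fac⟩

/-- Contractible model structures are weak factorization systems, which are encoded by their right
class since it determines the left one. -/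
def contractibleEquiv : {M : ModelStructure C // M.IsContractible} ≃
    {R : MorphismProperty C // IsWeakFactorizationSystem R.llp R} where
  toFun M := ⟨M.1.fib, by
    have := M.2.isWeakFactorizationSystem
    rwa [llp_eq_of_wfs M.1.cof]⟩
  invFun R := have := R.2; ⟨ofIsWeakFactorizationSystem R.1.llp R.1, fun _ _ _ => trivial⟩
  left_inv := by
    rintro ⟨M, hM⟩
    have hweq : M.weq = ⊤ := by
      ext X Y f
      exact iff_of_true (hM f) trivial
    have hcof : M.fib.llp = M.cof := hM.isWeakFactorizationSystem.llp
    obtain ⟨weq, fib, cof⟩ := M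
    obtain rfl : weq = ⊤ := hweq
    obtain rfl : fib.llp = cof := hcof
    rfl
  right_inv _ := rfl

end ModelStructure

theorem eq_bot_or_exists_coe_Ioc_or_exists_coe_Ioi {α : Type*} [LinearOrder α] [OrderBot α]
    (k x : α) : x = ⊥ ∨ (∃ y : Ioc ⊥ k, ↑y = x) ∨ ∃ y : Ioi k, ↑y = x := by
  rcases eq_bot_or_bot_lt x with hx | hx
  · exact .inl hx
  · exact .inr ((le_or_gt x k).imp (fun hxk => ⟨⟨x, hx, hxk⟩, rfl⟩) fun hkx => ⟨⟨x, hkx⟩, rfl⟩)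

/-- A bracketing function: an inflationary self-map `f` such that the intervals `[x, f x]` are
nested whenever they meet in one of their left endpoints. For finite linear orders these are the
bracketing vectors of binary trees. -/
structure IsBracketing {α : Type*} [Preorder α] (f : α → α) : Prop where
  le_apply (x : α) : x ≤ f x
  apply_le ⦃x y : α⦄ : x ≤ y → y ≤ f x → f y ≤ f x

namespace IsBracketing

section Preorder

variable {α : Type*} [Preorder α] {f : α → α}

theorem restrict (hf : IsBracketing f) {s : Set α} (hs : MapsTo f s s) :
    IsBracketing (hs.restrict f s s) where
  le_apply x := hf.le_apply x
  apply_le _ _ hxy hyx := hf.apply_le hxy hyx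

theorem mapsTo_Ioc (hf : IsBracketing f) (a : α) : MapsTo f (Ioc a (f a)) (Ioc a (f a)) :=
  fun x hx => ⟨hx.1.trans_le (hf.le_apply x), hf.apply_le hx.1.le hx.2⟩

theorem mapsTo_Ioi (hf : IsBracketing f) (a : α) : MapsTo f (Ioi a) (Ioi a) :=
  fun x hx => lt_of_lt_of_le hx (hf.le_apply x)

end Preorder

section Glue

variable {α : Type*} [LinearOrder α] [OrderBot α] {k : α}

/-- The self-map with value `k` at `⊥` that is given by `g` on `(⊥, k]` and by `h` above `k`. -/
def glue (g : Ioc ⊥ k → Ioc ⊥ k) (h : Ioi k → Ioi k) (x : α) : α :=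
  if hx : x = ⊥ then k
  else if hxk : x ≤ k then g ⟨x, bot_lt_iff_ne_bot.2 hx, hxk⟩
  else h ⟨x, not_le.1 hxk⟩

variable {g : Ioc ⊥ k → Ioc ⊥ k} {h : Ioi k → Ioi k}

theorem glue_bot : glue g h ⊥ = k :=
  dif_pos rfl

theorem glue_coe_Ioc (x : Ioc ⊥ k) : glue g h x = g x := by
  rw [glue, dif_neg x.2.1.ne', dif_pos x.2.2]

theorem glue_coe_Ioi (x : Ioi k) : glue g h x = h x := by
  rw [glue, dif_neg (bot_le.trans_lt x.2).ne', dif_neg (not_le.2 x.2)]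

theorem isBracketing_glue (hg : IsBracketing g) (hh : IsBracketing h) :
    IsBracketing (glue g h) where
  le_apply x := by
    obtain rfl | ⟨x, rfl⟩ | ⟨x, rfl⟩ := eq_bot_or_exists_coe_Ioc_or_exists_coe_Ioi k x
    · exact bot_le
    · rw [glue_coe_Ioc]
      exact hg.le_apply x
    · rw [glue_coe_Ioi]
      exact hh.le_apply x
  apply_le x y hxy hyx := by
    obtain rfl | ⟨x, rfl⟩ | ⟨x, rfl⟩ := eq_bot_or_exists_coe_Ioc_or_exists_coe_Ioi k x <;>
      obtain rfl | ⟨y, rfl⟩ | ⟨y, rfl⟩ := eq_bot_or_exists_coe_Ioc_or_exists_coe_Ioi k y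
    all_goals simp only [glue_bot, glue_coe_Ioc, glue_coe_Ioi] at hyx ⊢
    · exact le_rfl
    · exact (g y).2.2
    · exact absurd hyx (not_le.2 y.2)
    · exact absurd hxy (not_le.2 x.2.1)
    · exact hg.apply_le hxy hyx
    · exact absurd (hyx.trans (g x).2.2) (not_le.2 y.2)
    · exact absurd hxy (not_le.2 (bot_le.trans_lt x.2))
    · exact absurd (hxy.trans y.2.2) (not_le.2 x.2)
    · exact hh.apply_le hxy hyx

theorem glue_restrict {f : α → α} (hf : IsBracketing f) :
    glue ((hf.mapsTo_Ioc ⊥).restrict f _ _) ((hf.mapsTo_Ioi (f ⊥)).restrict f _ _) = f := by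
  funext x
  obtain rfl | ⟨x, hx⟩ | ⟨x, hx⟩ := eq_bot_or_exists_coe_Ioc_or_exists_coe_Ioi (f ⊥) x
  · exact glue_bot
  · rw [← hx, glue_coe_Ioc, MapsTo.val_restrict_apply]
  · rw [← hx, glue_coe_Ioi, MapsTo.val_restrict_apply]

/-- The Catalan decomposition: a bracketing function with value `k` at the bottom element amounts
to bracketing functions on `(⊥, k]` and on the elements above `k`. -/
def fiberEquiv (k : α) :
    {f : {f : α → α // IsBracketing f} // f.1 ⊥ = k} ≃
      {g : Ioc ⊥ k → Ioc ⊥ k // IsBracketing g} × {h : Ioi k → Ioi k // IsBracketing h} where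
  toFun f :=
    (⟨_, f.1.2.restrict (by simpa only [f.2] using f.1.2.mapsTo_Ioc ⊥)⟩,
      ⟨_, f.1.2.restrict (f.1.2.mapsTo_Ioi k)⟩)
  invFun p := ⟨⟨glue p.1.1 p.2.1, isBracketing_glue p.1.2 p.2.2⟩, glue_bot⟩
  left_inv := by
    rintro ⟨⟨f, hf⟩, rfl⟩
    exact Subtype.ext (Subtype.ext (glue_restrict hf))
  right_inv p :=
    Prod.ext (Subtype.ext (funext fun x => Subtype.ext (glue_coe_Ioc x)))
      (Subtype.ext (funext fun x => Subtype.ext (glue_coe_Ioi x)))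

end Glue

theorem card_eq_sum {α : Type*} [LinearOrder α] [OrderBot α] [Fintype α] :
    Nat.card {f : α → α // IsBracketing f} =
      ∑ k : α, Nat.card {g : Ioc ⊥ k → Ioc ⊥ k // IsBracketing g} *
        Nat.card {h : Ioi k → Ioi k // IsBracketing h} := by
  rw [← Nat.card_congr (Equiv.sigmaFiberEquiv fun f : {f : α → α // IsBracketing f} => f.1 ⊥),
    Nat.card_sigma]
  simp only [Nat.card_congr (fiberEquiv _), Nat.card_prod]

end IsBracketing

theorem card_Ioc_bot_of_orderIso_fin {α : Type*} [PartialOrder α] [OrderBot α] {n : ℕ}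
    (e : α ≃o Fin (n + 1)) (k : α) : Nat.card (Ioc ⊥ k) = e k := by
  have e_Ioc : Ioc ⊥ k ≃ Finset.Ioc ⊥ (e k) := e.toEquiv.subtypeEquiv (by simp [bot_lt_iff_ne_bot])
  rw [Nat.card_congr e_Ioc, Nat.card_eq_finsetCard, Fin.card_Ioc]
  rfl

theorem card_Ioi_of_orderIso_fin {α : Type*} [Preorder α] {n : ℕ} (e : α ≃o Fin (n + 1))
    (k : α) : Nat.card (Ioi k) = n - e k := by
  have e_Ioi : Ioi k ≃ Finset.Ioi (e k) := e.toEquiv.subtypeEquiv (by simp)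
  rw [Nat.card_congr e_Ioi, Nat.card_eq_finsetCard, Fin.card_Ioi, Nat.add_sub_cancel]

theorem card_isBracketing (α : Type*) [LinearOrder α] [Finite α] :
    Nat.card {f : α → α // IsBracketing f} = catalan (Nat.card α) := by
  induction hn : Nat.card α using Nat.strong_induction_on generalizing α with
  | _ n ih =>
    have := Fintype.ofFinite α
    cases n with
    | zero =>
      have : IsEmpty α := Finite.card_eq_zero_iff.1 hn
      have : Nonempty {f : α → α // IsBracketing f} := ⟨id, le_refl, fun _ _ _ h => h⟩
      rw [catalan_zero, Nat.card_unique]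
    | succ n =>
      have : Nonempty α := Finite.card_pos_iff.1 (hn ▸ n.succ_pos)
      let := WellFoundedLT.toOrderBot α
      have e : α ≃o Fin (n + 1) :=
        (Fintype.orderIsoFinOfCardEq α (Nat.card_eq_fintype_card.symm.trans hn)).symm
      rw [IsBracketing.card_eq_sum, catalan_succ]
      refine Fintype.sum_equiv e.toEquiv _ _ fun k => ?_
      rw [ih _ (e k).isLt _ (card_Ioc_bot_of_orderIso_fin e k),
        ih _ (Nat.lt_succ_of_le (Nat.sub_le n _)) _ (card_Ioi_of_orderIso_fin e k)]
      rfl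

theorem hasLiftingProperty_iff_le {α : Type*} [Preorder α] {a b x y : α} (i : a ⟶ b) (p : x ⟶ y) :
    HasLiftingProperty i p ↔ (a ≤ x → b ≤ y → b ≤ x) := by
  refine ⟨fun _ hax hby => ?_, fun h => ⟨fun {f g} _ => ?_⟩⟩
  · have sq : CommSq (homOfLE hax) i p (homOfLE hby) := ⟨Subsingleton.elim _ _⟩
    exact leOfHom sq.lift
  · exact ⟨⟨⟨homOfLE (h (leOfHom f) (leOfHom g)), Subsingleton.elim _ _, Subsingleton.elim _ _⟩⟩⟩

theorem rlp_of_le {α : Type*} [Preorder α] {L : MorphismProperty α} {x y z : α} {p : x ⟶ y}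
    (hp : L.rlp p) (q : x ⟶ z) (hzy : z ≤ y) : L.rlp q := fun _ _ i hi =>
  (hasLiftingProperty_iff_le i q).2 fun hax hbz =>
    (hasLiftingProperty_iff_le i p).1 (hp i hi) hax (hbz.trans hzy)

instance isStableUnderRetracts_of_partialOrder {α : Type*} [PartialOrder α]
    (P : MorphismProperty α) : P.IsStableUnderRetracts where
  of_retract {X Y X' Y' f g} h hg := by
    obtain rfl : X = X' := le_antisymm (leOfHom h.i.left) (leOfHom h.r.left)
    obtain rfl : Y = Y' := le_antisymm (leOfHom h.i.right) (leOfHom h.r.right)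
    rwa [Subsingleton.elim f g]

section RightClass

/-- The class of morphisms `x ⟶ y` with `y ≤ f x`: the fibrations of the contractible model
structure that a bracketing function `f` encodes. -/
def homsBelow {α : Type*} [Preorder α] (f : α → α) : MorphismProperty α :=
  fun x y _ => y ≤ f x

theorem IsBracketing.eq_of_homsBelow_eq {α : Type*} [PartialOrder α] {f g : α → α}
    (hf : IsBracketing f) (hg : IsBracketing g) (h : homsBelow f = homsBelow g) : f = g := by
  have le_iff_le {x y : α} (hxy : x ≤ y) : y ≤ f x ↔ y ≤ g x :=
    iff_of_eq (congrArg (fun P : MorphismProperty α => P (homOfLE hxy)) h)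
  exact funext fun x =>
    le_antisymm ((le_iff_le (hf.le_apply x)).1 le_rfl) ((le_iff_le (hg.le_apply x)).2 le_rfl)

variable {α : Type*} [LinearOrder α]

theorem IsBracketing.hasFactorization [WellFoundedLT α] {f : α → α} (hf : IsBracketing f) :
    HasFactorization (homsBelow f).llp (homsBelow f) where
  nonempty_mapFactorizationData {x y} p := by
    have hy : x ≤ y ∧ y ≤ f y := ⟨leOfHom p, hf.le_apply y⟩
    obtain ⟨z, hz⟩ := exists_minimal_of_wellFoundedLT (fun z => x ≤ z ∧ y ≤ f z) ⟨y, hy⟩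
    have hxz : (homsBelow f).llp (homOfLE hz.prop.1) := fun u v q hvu => by
      rw [hasLiftingProperty_iff_le]
      intro hxu hzv
      by_contra! huz
      have hzu : f z ≤ f u := hf.apply_le huz.le (hzv.trans hvu)
      exact hz.not_lt ⟨hxu, hz.prop.2.trans hzu⟩ huz
    have hzy : z ≤ y := not_lt.1 (hz.not_lt hy)
    exact ⟨⟨z, homOfLE hz.prop.1, homOfLE hzy, Subsingleton.elim _ _, hxz, hz.prop.2⟩⟩

theorem IsBracketing.isWeakFactorizationSystem [WellFoundedLT α] {f : α → α}
    (hf : IsBracketing f) : IsWeakFactorizationSystem (homsBelow f).llp (homsBelow f) :=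
  have := hf.hasFactorization
  .mk' _ _ fun _ p hi hp => hi p hp

theorem exists_isBracketing_homsBelow_eq_rlp [WellFoundedGT α] (L : MorphismProperty α) :
    ∃ f : α → α, IsBracketing f ∧ homsBelow f = L.rlp := by
  have exists_max (x : α) : ∃ m, x ≤ m ∧ ∀ ⦃y⦄ (p : x ⟶ y), y ≤ m ↔ L.rlp p := by
    obtain ⟨m, hm⟩ := exists_maximal_of_wellFoundedGT (fun y => ∃ p : x ⟶ y, L.rlp p)
      ⟨x, 𝟙 x, L.rlp.id_mem x⟩
    obtain ⟨q, hq⟩ := hm.prop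
    exact ⟨m, leOfHom q, fun y p => ⟨rlp_of_le hq p, fun hp => not_lt.1 (hm.not_gt ⟨p, hp⟩)⟩⟩
  choose f le_f le_f_iff using exists_max
  refine ⟨f, ⟨le_f, fun x y hxy hyx => ?_⟩, ?_⟩
  · have hp := (le_f_iff x (homOfLE hxy)).1 hyx
    have hq := (le_f_iff y (homOfLE (le_f y))).1 le_rfl
    exact (le_f_iff x _).2 (L.rlp.comp_mem _ _ hp hq)
  · ext x y p
    exact le_f_iff x p

/-- The weak factorization systems on a finite linear order, encoded by their right classes,
correspond to bracketing functions. -/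
noncomputable def bracketingEquiv [Finite α] : {f : α → α // IsBracketing f} ≃
    {R : MorphismProperty α // IsWeakFactorizationSystem R.llp R} :=
  .ofBijective (fun f => ⟨homsBelow f.1, f.2.isWeakFactorizationSystem⟩)
    ⟨fun f g h => Subtype.ext (f.2.eq_of_homsBelow_eq g.2 (congrArg Subtype.val h)), fun R => by
      obtain ⟨f, hf, hfR⟩ := exists_isBracketing_homsBelow_eq_rlp R.1.llp
      exact ⟨⟨f, hf⟩, Subtype.ext (hfR.trans R.2.rlp)⟩⟩

end RightClass

theorem card_contractible_model_structures_general (α : Type u) [LinearOrder α] [Finite α] :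
    Nat.card {M : ModelStructure α // M.IsContractible} = catalan (Nat.card α) := by
  rw [Nat.card_congr (ModelStructure.contractibleEquiv.trans bracketingEquiv.symm),
    card_isBracketing]

/-- The number of contractible model structures on `[n]` (those in which every
morphism is a weak equivalence) is the Catalan number `catalan (n+1)`. -/
theorem card_contractible_model_structures (n : ℕ) :
    Nat.card {M : ModelStructure (Fin (n + 1)) //
        ∀ ⦃x y : Fin (n + 1)⦄ (f : x ⟶ y), M.weq f} =
      catalan (n + 1) :=
  (card_contractible_model_structures_general (Fin (n + 1))).trans (by rw [Nat.card_fin])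
end

section
/- For every n : ℕ, the number of transfer systems on the linear order Fin (n+1) (with lattice operations min and max) is the Catalan number catalan(n+1). -/
/-- A transfer system on a lattice `L`: a binary relation refining `≤`,
reflexive, transitive, and closed under restriction. -/
structure TransferSystem (L : Type*) [Lattice L] where
  rel : L → L → Prop
  le_of_rel : ∀ x y, rel x y → x ≤ y
  refl : ∀ x, rel x x
  trans : ∀ x y z, rel x y → rel y z → rel x z
  restrict : ∀ x y z, rel x y → z ≤ y → rel (x ⊓ z) z

/-!
Let `L` be a finite linear order with bottom element, `R` a transfer system on `L`, and `k` the
largest element with `R ⊥ k`. By restriction `R ⊥ y` holds exactly for `y ≤ k`, so by transitivity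
no `x ≤ k` is related to an element above `k`. Hence `R` amounts to the choice of `k` and of
arbitrary transfer systems on `Ioc ⊥ k` and `Ioi k`, which is the recursion
`catalan (n + 1) = ∑ k, catalan k * catalan (n - k)`.
-/

namespace TransferSystem

open Set

section Lattice

variable {K L : Type*} [Lattice K] [Lattice L]

theorem rel_injective : Function.Injective (rel (L := L)) := by
  rintro ⟨⟩ ⟨⟩ rfl
  rfl

@[ext]
theorem ext {S T : TransferSystem L} (h : ∀ x y, S.rel x y ↔ T.rel x y) : S = T :=
  rel_injective (funext₂ fun x y => propext (h x y))

instance [Finite L] : Finite (TransferSystem L) :=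
  Finite.of_injective _ rel_injective

instance [IsEmpty L] : Unique (TransferSystem L) where
  default := ⟨fun _ _ => True, isEmptyElim, isEmptyElim, isEmptyElim, isEmptyElim⟩
  uniq _ := ext isEmptyElim

theorem rel_of_rel_of_le_of_le (T : TransferSystem L) {x y z : L} (hxy : T.rel x y)
    (hxz : x ≤ z) (hzy : z ≤ y) : T.rel x z :=
  inf_eq_left.2 hxz ▸ T.restrict x y z hxy hzy

/-- The transfer system induced on `K` by a transfer system on `L` along an embedding
of meet-semilattices. -/
def comap (f : K ↪o L) (hf : ∀ x y, f (x ⊓ y) = f x ⊓ f y) (T : TransferSystem L) :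
    TransferSystem K where
  rel x y := T.rel (f x) (f y)
  le_of_rel _ _ h := f.le_iff_le.1 (T.le_of_rel _ _ h)
  refl _ := T.refl _
  trans _ _ _ := T.trans _ _ _
  restrict x _ z h hzy := hf x z ▸ T.restrict _ _ _ h (f.monotone hzy)

/-- Transport of transfer systems along an isomorphism of lattices. -/
def congr (e : K ≃o L) : TransferSystem K ≃ TransferSystem L where
  toFun := comap e.symm.toOrderEmbedding e.symm.map_inf
  invFun := comap e.toOrderEmbedding e.map_inf
  left_inv T := by ext; simp [comap]
  right_inv T := by ext; simp [comap]

end Lattice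

section LinearOrder

variable {L : Type*} [LinearOrder L]

/-- On a linear order, closure under restriction need only be checked in the form of closure under
lowering the target, as `x ⊓ z` is either `x` or `z`. -/
def ofLinearOrder (rel : L → L → Prop) (le_of_rel : ∀ x y, rel x y → x ≤ y) (refl : ∀ x, rel x x)
    (trans : ∀ x y z, rel x y → rel y z → rel x z)
    (rel_of_le : ∀ x y z, rel x y → x ≤ z → z ≤ y → rel x z) : TransferSystem L where
  rel := rel
  le_of_rel := le_of_rel
  refl := refl
  trans := trans
  restrict x y z h hzy := by
    rcases le_total x z with hxz | hzx
    · exact (inf_eq_left.2 hxz).symm ▸ rel_of_le x y z h hxz hzy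
    · exact (inf_eq_right.2 hzx).symm ▸ refl z

/-- The transfer system induced on a subset of a linear order. -/
def restrictTo (S : Set L) (T : TransferSystem L) : TransferSystem S :=
  T.comap (OrderEmbedding.subtype (· ∈ S)) fun _ _ => Subtype.mono_coe _ |>.map_inf _ _

variable [OrderBot L]

theorem exists_isGreatest_rel_bot [WellFoundedGT L] (T : TransferSystem L) :
    ∃ k, IsGreatest {y | T.rel ⊥ y} k := by
  obtain ⟨k, hk⟩ := exists_maximal_of_wellFoundedGT (T.rel ⊥) ⟨⊥, T.refl ⊥⟩
  exact ⟨k, hk.prop, fun y hy => (le_total y k).elim id (hk.le_of_ge hy)⟩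

theorem le_of_isGreatest_of_le_of_rel {T : TransferSystem L} {k x y : L}
    (hk : IsGreatest {y | T.rel ⊥ y} k) (hx : x ≤ k) (hxy : T.rel x y) : y ≤ k :=
  hk.2 (T.trans _ _ _ (T.rel_of_rel_of_le_of_le hk.1 bot_le hx) hxy)

section Glue

variable {k : L} (A : TransferSystem (Ioc ⊥ k)) (B : TransferSystem (Ioi k))

/-- The transfer system on `L` in which `⊥` is related exactly to the elements of `Iic k`, and which
induces `A` on `Ioc ⊥ k` and `B` on `Ioi k`. -/
def glue : TransferSystem L :=
  ofLinearOrder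
    (fun x y =>
      x = ⊥ ∧ y ≤ k ∨ (∃ hx hy, A.rel ⟨x, hx⟩ ⟨y, hy⟩) ∨ ∃ hx hy, B.rel ⟨x, hx⟩ ⟨y, hy⟩)
    (le_of_rel := by
      rintro x y (⟨rfl, -⟩ | ⟨_, _, h⟩ | ⟨_, _, h⟩)
      exacts [bot_le, A.le_of_rel _ _ h, B.le_of_rel _ _ h])
    (refl := fun x => by
      rcases eq_bot_or_bot_lt x with rfl | hx
      · exact .inl ⟨rfl, bot_le⟩
      rcases le_or_gt x k with hxk | hkx
      · exact .inr (.inl ⟨⟨hx, hxk⟩, ⟨hx, hxk⟩, A.refl _⟩)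
      · exact .inr (.inr ⟨hkx, hkx, B.refl _⟩))
    (trans := by
      rintro x y z (⟨rfl, hy⟩ | ⟨hx, hy, h⟩ | ⟨hx, hy, h⟩)
        (⟨rfl, hz⟩ | ⟨hy', hz, h'⟩ | ⟨hy', hz, h'⟩)
      · exact .inl ⟨rfl, hz⟩
      · exact .inl ⟨rfl, hz.2⟩
      · exact absurd hy (not_le_of_gt hy')
      · exact absurd hy.1 (lt_irrefl _)
      · exact .inr (.inl ⟨hx, hz, A.trans _ _ _ h h'⟩)
      · exact absurd hy.2 (not_le_of_gt hy')
      · exact absurd hy not_lt_bot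
      · exact absurd hy'.2 (not_le_of_gt hy)
      · exact .inr (.inr ⟨hx, hz, B.trans _ _ _ h h'⟩))
    (rel_of_le := by
      rintro x y z (⟨rfl, hy⟩ | ⟨hx, hy, h⟩ | ⟨hx, hy, h⟩) hxz hzy
      · exact .inl ⟨rfl, hzy.trans hy⟩
      · exact .inr (.inl ⟨hx, ⟨hx.1.trans_le hxz, hzy.trans hy.2⟩,
          A.rel_of_rel_of_le_of_le h hxz hzy⟩)
      · exact .inr (.inr ⟨hx, lt_of_lt_of_le hx hxz, B.rel_of_rel_of_le_of_le h hxz hzy⟩))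

theorem isGreatest_glue_rel_bot : IsGreatest {y | (glue A B).rel ⊥ y} k := by
  refine ⟨.inl ⟨rfl, le_rfl⟩, ?_⟩
  rintro y (⟨-, hy⟩ | ⟨hx, -⟩ | ⟨hx, -⟩)
  exacts [hy, (lt_irrefl _ hx.1).elim, (not_lt_bot hx).elim]

theorem restrictTo_Ioc_glue : (glue A B).restrictTo (Ioc ⊥ k) = A := by
  ext ⟨x, hx⟩ ⟨y, hy⟩
  refine ⟨?_, fun h => .inr (.inl ⟨hx, hy, h⟩)⟩
  rintro (⟨rfl, -⟩ | ⟨_, _, h⟩ | ⟨hx', -⟩)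
  exacts [(lt_irrefl _ hx.1).elim, h, (not_le_of_gt hx' hx.2).elim]

theorem restrictTo_Ioi_glue : (glue A B).restrictTo (Ioi k) = B := by
  ext ⟨x, hx⟩ ⟨y, hy⟩
  refine ⟨?_, fun h => .inr (.inr ⟨hx, hy, h⟩)⟩
  rintro (⟨rfl, -⟩ | ⟨hx', _⟩ | ⟨_, _, h⟩)
  exacts [(not_lt_bot hx).elim, (not_le_of_gt hx hx'.2).elim, h]

end Glue

theorem glue_restrictTo {T : TransferSystem L} {k : L} (hk : IsGreatest {y | T.rel ⊥ y} k) :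
    glue (T.restrictTo (Ioc ⊥ k)) (T.restrictTo (Ioi k)) = T := by
  ext x y
  constructor
  · rintro (⟨rfl, hy⟩ | ⟨_, _, h⟩ | ⟨_, _, h⟩)
    exacts [T.rel_of_rel_of_le_of_le hk.1 bot_le hy, h, h]
  · intro h
    have hxy := T.le_of_rel x y h
    rcases eq_bot_or_bot_lt x with rfl | hx
    · exact .inl ⟨rfl, hk.2 h⟩
    rcases le_or_gt x k with hxk | hkx
    · exact .inr (.inl ⟨⟨hx, hxk⟩, ⟨hx.trans_le hxy, le_of_isGreatest_of_le_of_rel hk hxk h⟩, h⟩)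
    · exact .inr (.inr ⟨hkx, hkx.trans_le hxy, h⟩)

theorem glue_bijective [WellFoundedGT L] :
    Function.Bijective fun p : Σ k : L, TransferSystem (Ioc ⊥ k) × TransferSystem (Ioi k) =>
      glue p.2.1 p.2.2 := by
  constructor
  · rintro ⟨k, A, B⟩ ⟨k', A', B'⟩ (h : glue A B = glue A' B')
    obtain rfl : k = k' :=
      (isGreatest_glue_rel_bot A B).unique (h ▸ isGreatest_glue_rel_bot A' B')
    obtain rfl : A = A' := by
      rw [← restrictTo_Ioc_glue A B, h, restrictTo_Ioc_glue]
    obtain rfl : B = B' := by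
      rw [← restrictTo_Ioi_glue A B, h, restrictTo_Ioi_glue]
    rfl
  · intro T
    obtain ⟨k, hk⟩ := T.exists_isGreatest_rel_bot
    exact ⟨⟨k, T.restrictTo _, T.restrictTo _⟩, glue_restrictTo hk⟩

theorem card_eq_sum_card_mul_card [Fintype L] : Nat.card (TransferSystem L) =
    ∑ k : L, Nat.card (TransferSystem (Ioc ⊥ k)) * Nat.card (TransferSystem (Ioi k)) := by
  simp only [← Nat.card_congr (Equiv.ofBijective _ glue_bijective), Nat.card_sigma, Nat.card_prod]

end LinearOrder

theorem card_eq_card_fin (L : Type*) [LinearOrder L] [Finite L] :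
    Nat.card (TransferSystem L) = Nat.card (TransferSystem (Fin (Nat.card L))) := by
  have := Fintype.ofFinite L
  exact Nat.card_congr (congr (Fintype.orderIsoFinOfCardEq L Nat.card_eq_fintype_card.symm)).symm

theorem card_fin (n : ℕ) : Nat.card (TransferSystem (Fin n)) = catalan n := by
  induction n using Nat.strong_induction_on with
  | _ n ih =>
    cases n with
    | zero => rw [Nat.card_unique, catalan_zero]
    | succ n =>
      rw [card_eq_sum_card_mul_card, catalan_succ]
      refine Finset.sum_congr rfl fun k _ => ?_
      have hIoc : Nat.card (Ioc ⊥ k) = k := by simp [bot_eq_zero]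
      have hIoi : Nat.card (Ioi k) = n - k := by simp
      rw [card_eq_card_fin (Ioc ⊥ k), card_eq_card_fin (Ioi k), hIoc, hIoi, ih k k.2,
        ih (n - k) (by lia)]

end TransferSystem

theorem card_transfer_systems_general (L : Type*) [LinearOrder L] [Finite L] :
    Nat.card (TransferSystem L) = catalan (Nat.card L) := by
  rw [TransferSystem.card_eq_card_fin, TransferSystem.card_fin]

/-- The number of transfer systems on the linear order `Fin (n+1)` is the
Catalan number `catalan (n+1)`. -/
theorem card_transfer_systems (n : ℕ) :
    Nat.card (TransferSystem (Fin (n + 1))) = catalan (n + 1) := by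
  rw [card_transfer_systems_general, Nat.card_fin]
end

section
/- For natural numbers k ≤ n, the following identity holds: (n + k + 2) · ∑_{c} ∏_{i} catalan(cᵢ) = 2(k + 1) · C(2n+1, n−k), where the sum runs over all compositions c of n+1 having exactly k+1 blocks, and cᵢ ranges over the blocks of c. -/
/-!
Let `C` be the Catalan series. A composition with `k` blocks is a `k`-tuple of positive integers,
so, as `C = 1 + X * C ^ 2`, the Catalan-weighted sum over the compositions of `m` with `k` blocks is
the coefficient of `X ^ m` in `(C - 1) ^ k = (X * C ^ 2) ^ k`, that is, the coefficient of
`X ^ (m - k)` in `C ^ (2 * k)`. The identity `C ^ (r + 1) = C ^ r + X * C ^ (r + 2)` is Pascal's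
rule for the ballot numbers, so the coefficient of `X ^ (j + 1)` in `C ^ r` is
`choose (2 * j + r + 1) (j + 1) - choose (2 * j + r + 1) j`.
-/

section

open Finset PowerSeries

theorem sum_antidiagonalTuple_prod_eq_sum_composition {R : Type*} [CommSemiring R] {f : ℕ → R}
    (hf : f 0 = 0) (k m : ℕ) :
    ∑ x ∈ Nat.antidiagonalTuple k m, ∏ i, f (x i) =
      ∑ c : Composition m with c.length = k, (c.blocks.map f).prod := by
  have pos_of_prod_ne_zero (x : Fin k → ℕ) (hx : ∏ i, f (x i) ≠ 0) (i : Fin k) : 0 < x i :=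
    Nat.pos_of_ne_zero fun h => hx (prod_eq_zero (mem_univ i) (by rw [h, hf]))
  refine sum_bij_ne_zero
    (fun x hx hne =>
      { blocks := List.ofFn x
        blocks_pos := by simpa [List.mem_ofFn] using pos_of_prod_ne_zero x hne
        blocks_sum := by simpa [List.sum_ofFn, Nat.mem_antidiagonalTuple] using hx })
    ?_ ?_ ?_ ?_
  · simp [Composition.length]
  · intro x _ _ y _ _ hxy
    exact List.ofFn_injective (congrArg Composition.blocks hxy)
  · intro c hc hne
    obtain rfl : c.length = k := by simpa using hc
    refine ⟨c.blocksFun, by simp [Nat.mem_antidiagonalTuple, c.sum_blocksFun], ?_, ?_⟩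
    · rwa [← c.ofFn_blocksFun, List.map_ofFn, List.prod_ofFn] at hne
    · ext1
      exact c.ofFn_blocksFun
  · simp [List.map_ofFn, List.prod_ofFn]

theorem coeff_pow_eq_sum_composition {R : Type*} [CommSemiring R] {F : R⟦X⟧}
    (hF : constantCoeff F = 0) (k m : ℕ) :
    coeff m (F ^ k) =
      ∑ c : Composition m with c.length = k, (c.blocks.map fun b => coeff b F).prod := by
  rw [← sum_antidiagonalTuple_prod_eq_sum_composition (by simpa using hF), ← Fin.prod_const,
    coeff_prod]
  exact sum_equiv Finsupp.equivFunOnFinite (by simp [Nat.mem_antidiagonalTuple]) (by simp)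

theorem coeff_X_mul_catalanSeries_sq {n : ℕ} (hn : n ≠ 0) :
    coeff n (X * catalanSeries ^ 2) = catalan n := by
  simpa [coeff_one, hn, X_mul] using congrArg (coeff n) catalanSeries_sq_mul_X_add_one

theorem sum_composition_prod_catalan_eq_coeff (k m : ℕ) :
    ∑ c : Composition m with c.length = k, (c.blocks.map catalan).prod =
      coeff m ((X * catalanSeries ^ 2) ^ k) := by
  rw [coeff_pow_eq_sum_composition (by simp)]
  refine sum_congr rfl fun c _ => congrArg List.prod (List.map_congr_left fun b hb => ?_)
  exact (coeff_X_mul_catalanSeries_sq (c.blocks_pos hb).ne').symm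

theorem coeff_succ_catalanSeries_pow_succ (n r : ℕ) :
    coeff (n + 1) (catalanSeries ^ (r + 1)) =
      coeff (n + 1) (catalanSeries ^ r) + coeff n (catalanSeries ^ (r + 2)) := by
  have pow_succ_eq : catalanSeries ^ (r + 1) = catalanSeries ^ r + X * catalanSeries ^ (r + 2) := by
    rw [pow_succ]
    nth_rw 2 [← catalanSeries_sq_mul_X_add_one]
    ring
  rw [pow_succ_eq, map_add, coeff_succ_X_mul]

theorem coeff_succ_catalanSeries_pow_add_choose (j r : ℕ) :
    coeff (j + 1) (catalanSeries ^ r) + (2 * j + r + 1).choose j =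
      (2 * j + r + 1).choose (j + 1) := by
  induction j generalizing r with
  | zero => simp [coeff_one_pow]
  | succ j ihj =>
    induction r with
    | zero => simpa [coeff_one] using (Nat.choose_symm_half (j + 1)).symm
    | succ r ihr =>
      have ihj' := ihj (r + 2)
      rw [show 2 * j + (r + 2) + 1 = 2 * (j + 1) + r + 1 by ring] at ihj'
      rw [coeff_succ_catalanSeries_pow_succ, ← add_assoc (2 * (j + 1)) r 1,
        Nat.choose_succ_succ' _ j, Nat.choose_succ_succ' _ (j + 1), ← ihr, ← ihj']
      ring

theorem add_succ_mul_coeff_catalanSeries_pow_succ (j r : ℕ) :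
    (j + r + 1) * coeff j (catalanSeries ^ (r + 1)) = (r + 1) * (2 * j + r).choose j := by
  cases j with
  | zero => simp
  | succ j =>
    have ballot := coeff_succ_catalanSeries_pow_add_choose j (r + 1)
    have choose_ratio := Nat.choose_succ_right_eq (2 * (j + 1) + r) j
    rw [show 2 * j + (r + 1) + 1 = 2 * (j + 1) + r by ring] at ballot
    rw [show 2 * (j + 1) + r - j = j + r + 2 by omega] at choose_ratio
    zify at ballot choose_ratio ⊢
    linear_combination (j + r + 2 : ℤ) * ballot + choose_ratio

end

/-- For `k ≤ n`, `(n + k + 2)` times the sum, over all compositions of `n+1`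
with exactly `k+1` blocks, of the products of the Catalan numbers of the
blocks, equals `2 * (k+1) * C(2n+1, n-k)`. -/
theorem sum_compositions_fixed_length_prod_catalan (n k : ℕ) (hk : k ≤ n) :
    (n + k + 2) *
      ∑ c ∈ Finset.univ.filter (fun c : Composition (n + 1) => c.length = k + 1),
        (c.blocks.map catalan).prod =
      2 * (k + 1) * Nat.choose (2 * n + 1) (n - k) := by
  rw [sum_composition_prod_catalan_eq_coeff, mul_pow, ← pow_mul, PowerSeries.coeff_X_pow_mul',
    if_pos (Nat.succ_le_succ hk), Nat.add_sub_add_right]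
  obtain ⟨j, rfl⟩ := Nat.exists_eq_add_of_le' hk
  rw [Nat.add_sub_cancel]
  convert add_succ_mul_coeff_catalanSeries_pow_succ j (2 * k + 1) using 2 <;> ring_nf
end
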